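/- For every fixed c with 0 < c < 1 there exists a constant C > 0 such that for all sufficiently large x, |T_c(x) − T'_c(x)| ≤ C·x·log log x/(log x)². -/

import Mathlib

open Real Finset

attribute [local instance] Classical.propDecidable

/-- `Pplus n` is the largest prime factor of `n`, with the convention `Pplus 1 = 1`. -/
noncomputable def Pplus (n : ℕ) : ℕ := if n = 1 then 1 else n.primeFactors.sup id

/-- `T c x = #{p ≤ x : p prime, P⁺(p-1) ≥ p^c}`. -/
noncomputable def T (c x : ℝ) : ℕ :=
  ((Finset.range (⌊x⌋₊ + 1)).filter
    (fun p : ℕ => p.Prime ∧ (p : ℝ) ^ c ≤ (Pplus (p - 1) : ℝ))).card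

/-- `T' c x = #{p ≤ x : p prime, P⁺(p-1) ≥ x^c}`. -/
noncomputable def T' (c x : ℝ) : ℕ :=
  ((Finset.range (⌊x⌋₊ + 1)).filter
    (fun p : ℕ => p.Prime ∧ x ^ c ≤ (Pplus (p - 1) : ℝ))).card


section Sieve

open ArithmeticFunction in
/-- Partial Moebius sum. -/
lemma mob_sum (l k : ℕ) (hl : Squarefree l) :
    ∑ d ∈ l.divisors, (if k ∣ d then (moebius d : ℝ) else 0) =
      if k = l then (moebius l : ℝ) else 0 := by
  have hl0 : l ≠ 0 := hl.ne_zero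
  by_cases hk : k ∣ l
  · obtain ⟨j, rfl⟩ := hk
    have hk0 : k ≠ 0 := left_ne_zero_of_mul hl0
    have hj0 : j ≠ 0 := right_ne_zero_of_mul hl0
    have hco : k.Coprime j := Nat.coprime_of_squarefree_mul hl
    have h1 : ∑ d ∈ (k*j).divisors, (if k ∣ d then (moebius d : ℝ) else 0) =
        ∑ d ∈ j.divisors, (moebius (k*d) : ℝ) := by
      rw [← Finset.sum_filter]
      symm
      apply Finset.sum_bij (fun d _ => k * d)
      · intro d hd
        simp only [Finset.mem_filter, Nat.mem_divisors] at hd ⊢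
        exact ⟨⟨Nat.mul_dvd_mul_left k hd.1, hl0⟩, dvd_mul_right _ _⟩
      · intro a _ b _ h
        exact Nat.eq_of_mul_eq_mul_left (Nat.pos_of_ne_zero hk0) h
      · intro b hb
        simp only [Finset.mem_filter, Nat.mem_divisors] at hb
        obtain ⟨d, rfl⟩ := hb.2
        exact ⟨d, by
          simp only [Nat.mem_divisors]
          exact ⟨Nat.dvd_of_mul_dvd_mul_left (Nat.pos_of_ne_zero hk0) hb.1.1, hj0⟩, rfl⟩
      · intro _ _; rfl
    rw [h1]
    have h2 : ∀ d ∈ j.divisors, (moebius (k*d) : ℝ) = (moebius k : ℝ) * (moebius d : ℝ) := by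
      intro d hd
      rw [isMultiplicative_moebius.map_mul_of_coprime
        (Nat.Coprime.coprime_dvd_right (Nat.dvd_of_mem_divisors hd) hco)]
      push_cast; rfl
    rw [Finset.sum_congr rfl h2, ← Finset.mul_sum]
    have h3 : ∑ d ∈ j.divisors, (moebius d : ℝ) = if j = 1 then 1 else 0 := by
      have := congrArg (fun f => f j) moebius_mul_coe_zeta
      simp only [coe_mul_zeta_apply, one_apply] at this
      rw [← Int.cast_sum, this]; push_cast; congr
    rw [h3]
    by_cases hj : j = 1
    · simp [hj]
    · rw [if_neg hj, if_neg]
      · simp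
      · intro h
        apply hj
        have : k * 1 = k * j := by omega
        exact (Nat.eq_of_mul_eq_mul_left (Nat.pos_of_ne_zero hk0) this).symm
  · rw [if_neg (show ¬ k = l from fun h => hk (by rw [h]))]
    apply Finset.sum_eq_zero
    intro d hd
    rw [if_neg]
    intro h
    exact hk (h.trans (Nat.dvd_of_mem_divisors hd))

/-- Squarefree numbers up to `R`. -/
noncomputable def sqf (R : ℕ) : Finset ℕ := (Finset.Icc 1 R).filter Squarefree

/-- The Selberg sum. -/
noncomputable def selS (R : ℕ) : ℝ := ∑ l ∈ sqf R, (1 : ℝ) / (Nat.totient l : ℝ)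

/-- Partial Selberg sum. -/
noncomputable def selH (R d : ℕ) : ℝ :=
  ∑ l ∈ sqf R, if d ∣ l then (1 : ℝ) / (Nat.totient l : ℝ) else 0

/-- Unnormalised Selberg weights. -/
noncomputable def selG (R d : ℕ) : ℝ := d * (ArithmeticFunction.moebius d : ℝ) * selH R d

lemma selH_one (R : ℕ) : selH R 1 = selS R := by simp [selH, selS]

lemma selG_one (R : ℕ) : selG R 1 = selS R := by simp [selG, selH_one]

lemma selH_nonneg (R d : ℕ) : 0 ≤ selH R d := by
  unfold selH
  apply Finset.sum_nonneg
  intro l _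
  split_ifs <;> positivity

lemma selH_le (R d : ℕ) : selH R d ≤ selS R := by
  unfold selH selS
  apply Finset.sum_le_sum
  intro l _
  split_ifs
  · exact le_rfl
  · positivity

lemma selS_nonneg (R : ℕ) : 0 ≤ selS R := by
  rw [← selH_one]; exact selH_nonneg _ _

lemma abs_selG_le (R d : ℕ) : |selG R d| ≤ d * selS R := by
  unfold selG
  rw [abs_mul, abs_mul, abs_of_nonneg (selH_nonneg R d), abs_of_nonneg (Nat.cast_nonneg d)]
  have h1 : |(ArithmeticFunction.moebius d : ℝ)| ≤ 1 := by
    have := ArithmeticFunction.abs_moebius_le_one (n := d)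
    exact_mod_cast this
  calc (d : ℝ) * |(ArithmeticFunction.moebius d : ℝ)| * selH R d ≤ d * 1 * selS R := by
        gcongr
        · exact selH_nonneg _ _
        · exact selH_le R d
    _ = _ := by ring

lemma selG_diag (R k : ℕ) :
    ∑ d ∈ Finset.Icc 1 R, (if k ∣ d then (ArithmeticFunction.moebius d : ℝ) * selH R d else 0) =
    ∑ l ∈ sqf R, if k = l then (ArithmeticFunction.moebius l : ℝ) / (Nat.totient l : ℝ) else 0 := by
  have h1 : ∀ d ∈ Finset.Icc 1 R,
      (if k ∣ d then (ArithmeticFunction.moebius d : ℝ) * selH R d else 0) =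
      ∑ l ∈ sqf R, (1 : ℝ) / (Nat.totient l : ℝ) *
        (if d ∣ l then (if k ∣ d then (ArithmeticFunction.moebius d : ℝ) else 0) else 0) := by
    intro d _
    unfold selH
    split_ifs with h
    · rw [Finset.mul_sum]
      apply Finset.sum_congr rfl
      intro l _
      split_ifs <;> ring
    · simp
  rw [Finset.sum_congr rfl h1, Finset.sum_comm]
  apply Finset.sum_congr rfl
  intro l hl
  rw [← Finset.mul_sum]
  simp only [sqf, Finset.mem_filter, Finset.mem_Icc] at hl
  have h2 : ∑ d ∈ Finset.Icc 1 R,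
      (if d ∣ l then (if k ∣ d then (ArithmeticFunction.moebius d : ℝ) else 0) else 0) =
      ∑ d ∈ l.divisors, (if k ∣ d then (ArithmeticFunction.moebius d : ℝ) else 0) := by
    rw [← Finset.sum_filter]
    apply Finset.sum_congr _ (fun _ _ => rfl)
    ext d
    simp only [Finset.mem_filter, Finset.mem_Icc, Nat.mem_divisors]
    constructor
    · rintro ⟨_, h⟩; exact ⟨h, by omega⟩
    · rintro ⟨h, h0⟩
      have := Nat.le_of_dvd (by omega) h
      have := Nat.pos_of_dvd_of_pos h (by omega)
      exact ⟨⟨by omega, by omega⟩, h⟩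
  rw [h2, mob_sum l k hl.2]
  split_ifs <;> ring

lemma sel_quad (R : ℕ) :
    ∑ d ∈ Finset.Icc 1 R, ∑ e ∈ Finset.Icc 1 R, selG R d * selG R e / (Nat.lcm d e : ℝ) =
      selS R := by
  have h1 : ∀ d ∈ Finset.Icc 1 R, ∀ e ∈ Finset.Icc 1 R,
      selG R d * selG R e / (Nat.lcm d e : ℝ) =
      ∑ k ∈ Finset.Icc 1 R, (Nat.totient k : ℝ) *
        ((if k ∣ d then (ArithmeticFunction.moebius d : ℝ) * selH R d else 0) *
        (if k ∣ e then (ArithmeticFunction.moebius e : ℝ) * selH R e else 0)) := by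
    intro d hd e he
    simp only [Finset.mem_Icc] at hd he
    have hg : ((Nat.gcd d e : ℕ) : ℝ) = ∑ k ∈ Finset.Icc 1 R,
        if k ∣ d ∧ k ∣ e then (Nat.totient k : ℝ) else 0 := by
      rw [← Finset.sum_filter]
      conv_lhs => rw [← Nat.sum_totient (Nat.gcd d e)]
      push_cast
      apply Finset.sum_congr _ (fun _ _ => rfl)
      ext k
      simp only [Finset.mem_filter, Finset.mem_Icc, Nat.mem_divisors, Nat.dvd_gcd_iff]
      constructor
      · rintro ⟨h, h0⟩
        have := Nat.le_of_dvd (by omega) h.1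
        have := Nat.pos_of_dvd_of_pos h.1 (by omega)
        exact ⟨⟨by omega, by omega⟩, h⟩
      · rintro ⟨_, h⟩
        exact ⟨h, (Nat.gcd_pos_of_pos_left _ (by omega)).ne'⟩
    have hgl : (Nat.gcd d e : ℝ) * (Nat.lcm d e : ℝ) = d * e := by
      exact_mod_cast Nat.gcd_mul_lcm d e
    have hl0 : (Nat.lcm d e : ℝ) ≠ 0 := by
      have := Nat.lcm_pos (show 0 < d by omega) (show 0 < e by omega)
      positivity
    have h2 : selG R d * selG R e / (Nat.lcm d e : ℝ) = (Nat.gcd d e : ℝ) *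
        (((ArithmeticFunction.moebius d : ℝ) * selH R d) *
          ((ArithmeticFunction.moebius e : ℝ) * selH R e)) := by
      rw [div_eq_iff hl0]
      unfold selG
      linear_combination (-((ArithmeticFunction.moebius d : ℝ) * selH R d) *
          ((ArithmeticFunction.moebius e : ℝ) * selH R e)) * hgl
    rw [h2, hg, Finset.sum_mul]
    apply Finset.sum_congr rfl
    intro k _
    by_cases a : k ∣ d <;> by_cases b : k ∣ e <;> simp [a, b]
  rw [Finset.sum_congr rfl (fun d hd => Finset.sum_congr rfl (h1 d hd))]
  rw [Finset.sum_congr rfl (fun d _ => Finset.sum_comm), Finset.sum_comm]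
  have h3 : ∀ k ∈ Finset.Icc 1 R, ∑ d ∈ Finset.Icc 1 R, ∑ e ∈ Finset.Icc 1 R,
      (Nat.totient k : ℝ) *
        ((if k ∣ d then (ArithmeticFunction.moebius d : ℝ) * selH R d else 0) *
        (if k ∣ e then (ArithmeticFunction.moebius e : ℝ) * selH R e else 0)) =
      if Squarefree k then (1 : ℝ) / (Nat.totient k : ℝ) else 0 := by
    intro k hk
    simp_rw [← Finset.mul_sum]
    rw [← Finset.sum_mul, selG_diag, Finset.sum_ite_eq]
    have hk' := Finset.mem_Icc.mp hk
    have hphi : (0 : ℝ) < (Nat.totient k : ℝ) := by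
      exact_mod_cast Nat.totient_pos.mpr (by omega)
    by_cases hs : Squarefree k
    · have hmem : k ∈ sqf R := by simp only [sqf, Finset.mem_filter]; exact ⟨hk, hs⟩
      rw [if_pos hmem, if_pos hs]
      have hmu : (ArithmeticFunction.moebius k : ℝ) ^ 2 = 1 := by
        have := ArithmeticFunction.moebius_sq_eq_one_of_squarefree hs
        exact_mod_cast this
      field_simp
      linarith
    · have hmem : k ∉ sqf R := by simp only [sqf, Finset.mem_filter]; tauto
      rw [if_neg hmem, if_neg hs]; simp
  rw [Finset.sum_congr rfl h3, ← Finset.sum_filter]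
  rfl

lemma count_ap (q N d : ℕ) (hd : 0 < d) (hco : Nat.Coprime q d) :
    |(∑ m ∈ Finset.Ioc 0 N, if d ∣ m * q + 1 then (1 : ℝ) else 0) - N / d| ≤ 1 := by
  obtain ⟨v, hv⟩ : ∃ v : ℕ, ∀ m : ℕ, d ∣ m * q + 1 ↔ m ≡ v [MOD d] := by
    have : NeZero d := ⟨hd.ne'⟩
    let u := ZMod.unitOfCoprime q hco
    refine ⟨((-((u⁻¹ : (ZMod d)ˣ) : ZMod d))).val, fun m => ?_⟩
    rw [← ZMod.natCast_eq_natCast_iff, ← ZMod.natCast_eq_zero_iff]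
    push_cast
    rw [ZMod.natCast_zmod_val]
    have hu : (q : ZMod d) = (u : ZMod d) := (ZMod.coe_unitOfCoprime q hco).symm
    rw [hu, ← eq_neg_iff_add_eq_zero, ← Units.eq_mul_inv_iff_mul_eq]
    simp
  simp_rw [hv]
  rw [← Finset.sum_filter, Finset.sum_const, nsmul_eq_mul, mul_one]
  have h := Nat.Ioc_filter_modEq_card 0 N hd v
  have e1 : ((Finset.filter (fun m => m ≡ v [MOD d]) (Finset.Ioc 0 N)).card : ℤ) =
     max (⌊((N : ℚ) - v) / d⌋ - ⌊((0:ℕ) - v : ℚ) / d⌋) 0 := by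
    rw [← h]
  have hd' : (0 : ℚ) < d := by exact_mod_cast hd
  have e2 : ((0:ℕ) - v : ℚ) / d ≤ ((N : ℚ) - v) / d := by
    gcongr; simp
  rw [max_eq_left (by have := Int.floor_le_floor e2; omega)] at e1
  have f1 := Int.floor_le (((N : ℚ) - v) / d)
  have f2 := Int.lt_floor_add_one (((N : ℚ) - v) / d)
  have f3 := Int.floor_le (((0:ℕ) - v : ℚ) / d)
  have f4 := Int.lt_floor_add_one (((0:ℕ) - v : ℚ) / d)
  have e3 : ((N : ℚ) - v) / d - ((0:ℕ) - v : ℚ) / d = N / d := by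
    push_cast; ring
  have e4 : ((Finset.filter (fun m => m ≡ v [MOD d]) (Finset.Ioc 0 N)).card : ℚ) =
     ⌊((N : ℚ) - v) / d⌋ - ⌊((0:ℕ) - v : ℚ) / d⌋ := by exact_mod_cast e1
  have e5 : |((Finset.filter (fun m => m ≡ v [MOD d]) (Finset.Ioc 0 N)).card : ℚ) - N / d| ≤ 1 := by
    rw [abs_le]; constructor <;> linarith
  have e6 := (Rat.cast_le (K := ℝ)).mpr e5
  push_cast at e6
  convert e6 using 4

lemma sieve_bound (q N R : ℕ) (hq : q.Prime) (hR : R < q) (hR1 : 1 ≤ R) :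
    (((Finset.Ioc 0 N).filter (fun m => (m * q + 1).Prime)).card : ℝ) ≤
      N / selS R + (R : ℝ) ^ 4 := by
  have hS : 0 < selS R := by
    unfold selS
    apply Finset.sum_pos
    · intro l hl
      simp only [sqf, Finset.mem_filter, Finset.mem_Icc] at hl
      have : 0 < Nat.totient l := Nat.totient_pos.mpr (by omega)
      positivity
    · exact ⟨1, by simp [sqf, hR1]⟩
  let W : ℕ → ℝ := fun m => ∑ d ∈ Finset.Icc 1 R, selG R d * (if d ∣ m * q + 1 then (1 : ℝ) else 0)
  have hW : ∀ m ∈ (Finset.Ioc 0 N).filter (fun m => (m * q + 1).Prime), W m = selS R := by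
    intro m hm
    simp only [Finset.mem_filter, Finset.mem_Ioc] at hm
    rw [← selG_one]
    change ∑ d ∈ Finset.Icc 1 R, _ = _
    rw [Finset.sum_eq_single 1]
    · simp
    · intro d hd h1
      rw [Finset.mem_Icc] at hd
      rw [if_neg, mul_zero]
      intro hdv
      rcases (Nat.dvd_prime hm.2).mp hdv with h | h
      · exact h1 h
      · have : q ≤ m * q := Nat.le_mul_of_pos_left q hm.1.1
        omega
    · intro h; exact absurd (Finset.mem_Icc.mpr ⟨le_rfl, hR1⟩) h
  have h1 : (((Finset.Ioc 0 N).filter (fun m => (m * q + 1).Prime)).card : ℝ) * selS R ^ 2 ≤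
      ∑ m ∈ Finset.Ioc 0 N, W m ^ 2 := by
    calc _ = ∑ m ∈ (Finset.Ioc 0 N).filter (fun m => (m * q + 1).Prime), W m ^ 2 := by
          rw [Finset.sum_congr rfl (fun m hm => by rw [hW m hm]), Finset.sum_const, nsmul_eq_mul]
      _ ≤ _ := Finset.sum_le_sum_of_subset_of_nonneg (Finset.filter_subset _ _)
          (fun _ _ _ => sq_nonneg _)
  have h2 : ∑ m ∈ Finset.Ioc 0 N, W m ^ 2 = ∑ d ∈ Finset.Icc 1 R, ∑ e ∈ Finset.Icc 1 R,
      selG R d * selG R e *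
        ∑ m ∈ Finset.Ioc 0 N, (if Nat.lcm d e ∣ m * q + 1 then (1 : ℝ) else 0) := by
    have : ∀ m ∈ Finset.Ioc 0 N, W m ^ 2 = ∑ d ∈ Finset.Icc 1 R, ∑ e ∈ Finset.Icc 1 R,
      selG R d * selG R e * (if Nat.lcm d e ∣ m * q + 1 then (1 : ℝ) else 0) := by
      intro m _
      rw [sq]
      change (∑ d ∈ Finset.Icc 1 R, _) * (∑ d ∈ Finset.Icc 1 R, _) = _
      rw [Finset.sum_mul_sum]
      apply Finset.sum_congr rfl; intro d _
      apply Finset.sum_congr rfl; intro e _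
      by_cases a : d ∣ m * q + 1 <;> by_cases b : e ∣ m * q + 1 <;> simp [a, b, Nat.lcm_dvd_iff]
    rw [Finset.sum_congr rfl this, Finset.sum_comm]
    apply Finset.sum_congr rfl; intro d _
    rw [Finset.sum_comm]
    apply Finset.sum_congr rfl; intro e _
    rw [Finset.mul_sum]
  have h3 : ∑ m ∈ Finset.Ioc 0 N, W m ^ 2 ≤ ∑ d ∈ Finset.Icc 1 R, ∑ e ∈ Finset.Icc 1 R,
      (N * (selG R d * selG R e / (Nat.lcm d e : ℝ)) + (R * selS R) * (R * selS R)) := by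
    rw [h2]
    apply Finset.sum_le_sum; intro d hd
    apply Finset.sum_le_sum; intro e he
    rw [Finset.mem_Icc] at hd he
    have cop : ∀ a, 1 ≤ a → a ≤ R → Nat.Coprime q a := fun a h1 h2 =>
      (Nat.Prime.coprime_iff_not_dvd hq).mpr (fun h => by
        have := Nat.le_of_dvd (by omega) h; omega)
    have hc : Nat.Coprime q (Nat.lcm d e) :=
      Nat.Coprime.coprime_dvd_right (Nat.lcm_dvd_mul d e)
        (Nat.Coprime.mul_right (cop d hd.1 hd.2) (cop e he.1 he.2))
    have hcount := count_ap q N (Nat.lcm d e) (Nat.lcm_pos (by omega) (by omega)) hc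
    set A := ∑ m ∈ Finset.Ioc 0 N, (if Nat.lcm d e ∣ m * q + 1 then (1 : ℝ) else 0)
    have hd2 : |selG R d| ≤ R * selS R := (abs_selG_le R d).trans (by
      gcongr; exact hd.2)
    have he2 : |selG R e| ≤ R * selS R := (abs_selG_le R e).trans (by
      gcongr; exact he.2)
    have : selG R d * selG R e * (A - N / (Nat.lcm d e : ℝ)) ≤ (R * selS R) * (R * selS R) := by
      calc _ ≤ |selG R d * selG R e * (A - N / (Nat.lcm d e : ℝ))| := le_abs_self _
        _ = |selG R d| * |selG R e| * |A - N / (Nat.lcm d e : ℝ)| := by rw [abs_mul, abs_mul]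
        _ ≤ (R * selS R) * (R * selS R) * 1 := by gcongr
        _ = _ := mul_one _
    have e : selG R d * selG R e * A = selG R d * selG R e * (A - N / (Nat.lcm d e : ℝ)) +
      N * (selG R d * selG R e / (Nat.lcm d e : ℝ)) := by ring
    rw [e]; linarith
  have h4 : ∑ d ∈ Finset.Icc 1 R, ∑ e ∈ Finset.Icc 1 R,
      (N * (selG R d * selG R e / (Nat.lcm d e : ℝ)) + (R * selS R) * (R * selS R)) =
      N * selS R + (R : ℝ) ^ 4 * selS R ^ 2 := by
    simp_rw [Finset.sum_add_distrib, ← Finset.mul_sum]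
    rw [sel_quad]
    simp
    ring
  have h5 := h1.trans (h3.trans h4.le)
  have h6 : N * selS R + (R : ℝ) ^ 4 * selS R ^ 2 = (N / selS R + (R : ℝ) ^ 4) * selS R ^ 2 := by
    field_simp
  rw [h6] at h5
  exact le_of_mul_le_mul_right h5 (by positivity)

lemma sum_inv_sq_le (R : ℕ) : ∑ k ∈ Finset.Icc 1 R, (1 : ℝ) / (k : ℝ) ^ 2 ≤ 2 := by
  have h : ∀ R : ℕ, ∑ k ∈ Finset.Icc 1 R, (1 : ℝ) / (k : ℝ) ^ 2 ≤ 2 - 1 / R := by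
    intro R
    induction R with
    | zero => simp
    | succ n ih =>
      rw [Finset.sum_Icc_succ_top (by omega)]
      rcases Nat.eq_zero_or_pos n with rfl | hn
      · norm_num
      · have hn' : (0 : ℝ) < n := by exact_mod_cast hn
        have : (1 : ℝ) / ((n : ℝ) + 1) ^ 2 ≤ 1 / n - 1 / (n + 1) := by
          rw [div_sub_div _ _ (by positivity) (by positivity),
            div_le_div_iff₀ (by positivity) (by positivity)]
          nlinarith
        push_cast
        linarith
  have := h R
  have h2 : (0 : ℝ) ≤ 1 / R := by positivity
  linarith

lemma selS_ge (R : ℕ) : Real.log (R + 1) / 2 ≤ selS R := by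
  have h1 : Real.log (R + 1) ≤ ∑ n ∈ Finset.Icc 1 R, (1 : ℝ) / n := by
    have := log_add_one_le_harmonic R
    rw [harmonic_eq_sum_Icc] at this
    push_cast at this
    simpa [one_div] using this
  have h2 : ∑ n ∈ Finset.Icc 1 R, (1 : ℝ) / n ≤
      ∑ y ∈ sqf R ×ˢ Finset.Icc 1 R, (1 : ℝ) / (y.1 : ℝ) * (1 / (y.2 : ℝ) ^ 2) := by
    have h : ∀ n : ℕ, ∃ y : ℕ × ℕ, n ∈ Finset.Icc 1 R →
        (y ∈ sqf R ×ˢ Finset.Icc 1 R ∧ y.2 ^ 2 * y.1 = n) := by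
      intro n
      obtain ⟨a, b, hab, hs⟩ := Nat.sq_mul_squarefree n
      refine ⟨(a, b), fun hn => ⟨?_, hab⟩⟩
      rw [Finset.mem_Icc] at hn
      have ha : a ≠ 0 := by rintro rfl; simp at hab; omega
      have hb : b ≠ 0 := by rintro rfl; simp at hab; omega
      have ha' : a ≤ n := by rw [← hab]; exact Nat.le_mul_of_pos_left _ (by positivity)
      have hb' : b ≤ n := by rw [← hab]; nlinarith [Nat.pos_of_ne_zero ha, Nat.pos_of_ne_zero hb, Nat.mul_pos (Nat.pos_of_ne_zero ha) (Nat.pos_of_ne_zero hb)]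
      simp only [sqf, Finset.mem_product, Finset.mem_filter, Finset.mem_Icc]
      exact ⟨⟨⟨by omega, by omega⟩, hs⟩, by omega, by omega⟩
    choose F hF using h
    have hinj : Set.InjOn F (Finset.Icc 1 R : Set ℕ) := by
      intro a ha b hb hab
      rw [← (hF a ha).2, ← (hF b hb).2, hab]
    calc ∑ n ∈ Finset.Icc 1 R, (1 : ℝ) / n =
        ∑ n ∈ Finset.Icc 1 R, (1 : ℝ) / ((F n).1 : ℝ) * (1 / ((F n).2 : ℝ) ^ 2) := by
          apply Finset.sum_congr rfl
          intro n hn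
          conv_lhs => rw [← (hF n hn).2]
          push_cast
          rw [one_div_mul_one_div, mul_comm]
      _ = ∑ y ∈ (Finset.Icc 1 R).image F, (1 : ℝ) / (y.1 : ℝ) * (1 / (y.2 : ℝ) ^ 2) := by
          rw [Finset.sum_image hinj]
      _ ≤ _ := by
          apply Finset.sum_le_sum_of_subset_of_nonneg
          · intro y hy
            obtain ⟨n, hn, rfl⟩ := Finset.mem_image.mp hy
            exact (hF n hn).1
          · intros; positivity
  rw [Finset.sum_product] at h2
  simp only at h2
  rw [← Finset.sum_mul_sum] at h2
  have h3 : ∑ l ∈ sqf R, (1 : ℝ) / (l : ℝ) ≤ selS R := by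
    unfold selS
    apply Finset.sum_le_sum
    intro l hl
    simp only [sqf, Finset.mem_filter, Finset.mem_Icc] at hl
    have : 0 < Nat.totient l := Nat.totient_pos.mpr (by omega)
    have h' : Nat.totient l ≤ l := Nat.totient_le l
    gcongr
  have h4 := sum_inv_sq_le R
  have h5 : (∑ l ∈ sqf R, (1 : ℝ) / (l : ℝ)) * ∑ k ∈ Finset.Icc 1 R, (1 : ℝ) / (k : ℝ) ^ 2 ≤
      selS R * 2 := by
    gcongr
    exact selS_nonneg R
  linarith

end Sieve

section Analytic

lemma sum_log_div_le (a : ℝ) (ha : 0 < a) (k : ℕ) : ∀ Q : Finset ℕ,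
    (∀ q ∈ Q, q.Prime ∧ a ≤ q ∧ (q : ℝ) < 2 ^ k * a) →
    ∑ q ∈ Q, Real.log q / q ≤ k * (2 * Real.log 4) := by
  induction k with
  | zero =>
    intro Q hQ
    have : Q = ∅ := by
      apply Finset.eq_empty_of_forall_notMem
      intro q hq
      have := hQ q hq
      linarith [this.2.1, this.2.2]
    simp [this]
  | succ k ih =>
    intro Q hQ
    rw [← Finset.sum_filter_add_sum_filter_not Q (fun q : ℕ => (q : ℝ) < 2 ^ k * a)]
    have h1 := ih (Q.filter (fun q : ℕ => (q : ℝ) < 2 ^ k * a)) (by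
      intro q hq
      rw [Finset.mem_filter] at hq
      exact ⟨(hQ q hq.1).1, (hQ q hq.1).2.1, hq.2⟩)
    have h2 : ∑ q ∈ Q.filter (fun q : ℕ => ¬ (q : ℝ) < 2 ^ k * a), Real.log q / q ≤
        2 * Real.log 4 := by
      have hpos : 0 < 2 ^ k * a := by positivity
      calc _ ≤ ∑ q ∈ Q.filter (fun q : ℕ => ¬ (q : ℝ) < 2 ^ k * a),
            Real.log q / (2 ^ k * a) := by
            apply Finset.sum_le_sum
            intro q hq
            rw [Finset.mem_filter, not_lt] at hq
            have : 0 ≤ Real.log q := Real.log_natCast_nonneg q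
            gcongr
            exact hq.2
        _ = (∑ q ∈ Q.filter (fun q : ℕ => ¬ (q : ℝ) < 2 ^ k * a), Real.log q) / (2 ^ k * a) := by
            rw [Finset.sum_div]
        _ ≤ Chebyshev.theta (2 ^ (k+1) * a) / (2 ^ k * a) := by
            gcongr
            rw [Chebyshev.theta_eq_sum_Icc]
            apply Finset.sum_le_sum_of_subset_of_nonneg
            · intro q hq
              rw [Finset.mem_filter] at hq
              rw [Finset.mem_filter, Finset.mem_Icc]
              have := hQ q hq.1
              exact ⟨⟨Nat.zero_le _, Nat.le_floor this.2.2.le⟩, this.1⟩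
            · intro q _ _
              exact Real.log_natCast_nonneg q
        _ ≤ (Real.log 4 * (2 ^ (k+1) * a)) / (2 ^ k * a) := by
            gcongr
            exact Chebyshev.theta_le_log4_mul_x (by positivity)
        _ = _ := by field_simp; ring
    push_cast
    linarith

lemma sum_inv_le (a : ℝ) (ha : 1 < a) (k : ℕ) (Q : Finset ℕ)
    (hQ : ∀ q ∈ Q, q.Prime ∧ a ≤ q ∧ (q : ℝ) < 2 ^ k * a) :
    ∑ q ∈ Q, (1 : ℝ) / q ≤ k * (2 * Real.log 4) / Real.log a := by
  have hl := Real.log_pos ha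
  rw [le_div_iff₀ hl]
  refine le_trans ?_ (sum_log_div_le a (by linarith) k Q hQ)
  rw [Finset.sum_mul]
  apply Finset.sum_le_sum
  intro q hq
  have h := hQ q hq
  rw [one_div_mul_eq_div]
  gcongr
  exact h.2.1

lemma Pplus_spec (n : ℕ) (hn : 2 ≤ n) : (Pplus n).Prime ∧ Pplus n ∣ n := by
  unfold Pplus
  rw [if_neg (by omega)]
  have hne : n.primeFactors.Nonempty := Nat.nonempty_primeFactors.mpr (by omega)
  obtain ⟨q, hq, h⟩ := Finset.exists_mem_eq_sup n.primeFactors hne id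
  rw [h]
  exact ⟨Nat.prime_of_mem_primeFactors hq, Nat.dvd_of_mem_primeFactors hq⟩

lemma T_diff (c x : ℝ) (hc : 0 < c) (hx : 0 < x) :
    |(T c x : ℝ) - (T' c x : ℝ)| = (((Finset.range (⌊x⌋₊ + 1)).filter
      (fun p : ℕ => p.Prime ∧ (p : ℝ) ^ c ≤ (Pplus (p - 1) : ℝ) ∧
        (Pplus (p - 1) : ℝ) < x ^ c)).card : ℝ) := by
  have h : T c x = T' c x + ((Finset.range (⌊x⌋₊ + 1)).filter
      (fun p : ℕ => p.Prime ∧ (p : ℝ) ^ c ≤ (Pplus (p - 1) : ℝ) ∧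
        (Pplus (p - 1) : ℝ) < x ^ c)).card := by
    unfold T T'
    rw [← Finset.card_union_of_disjoint]
    · congr 1
      ext p
      simp only [Finset.mem_union, Finset.mem_filter, Finset.mem_range]
      constructor
      · rintro ⟨h1, h2, h3⟩
        by_cases h : x ^ c ≤ (Pplus (p - 1) : ℝ)
        · exact Or.inl ⟨h1, h2, h⟩
        · exact Or.inr ⟨h1, h2, h3, not_le.mp h⟩
      · rintro (⟨h1, h2, h3⟩ | ⟨h1, h2, h3, h4⟩)
        · refine ⟨h1, h2, le_trans ?_ h3⟩
          have : (p : ℝ) ≤ x := (Nat.le_floor_iff hx.le).mp (by omega)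
          gcongr
        · exact ⟨h1, h2, h3⟩
    · rw [Finset.disjoint_left]
      intro p h1 h2
      rw [Finset.mem_filter] at h1 h2
      exact absurd h1.2.2 (not_le.mpr h2.2.2.2)
  rw [h]
  push_cast
  rw [add_sub_cancel_left, abs_of_nonneg (by positivity)]

lemma diff_card (c x y : ℝ) (hc : 0 < c) (hx : 0 < x) (hy : 3 ≤ y) (R : ℕ) (hR1 : 1 ≤ R)
    (hR : (R : ℝ) < y ^ c) :
    |(T c x : ℝ) - (T' c x : ℝ)| ≤ (Nat.primeCounting ⌊y⌋₊ : ℝ) +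
      ∑ q ∈ (Finset.Icc 1 ⌊x ^ c⌋₊).filter
        (fun q : ℕ => q.Prime ∧ y ^ c ≤ q ∧ (q : ℝ) < x ^ c),
        (x / selS R * (1 / q) + (R : ℝ) ^ 4) := by
  rw [T_diff c x hc hx]
  set Q := (Finset.Icc 1 ⌊x ^ c⌋₊).filter
        (fun q : ℕ => q.Prime ∧ y ^ c ≤ q ∧ (q : ℝ) < x ^ c) with hQ
  have hsub : (Finset.range (⌊x⌋₊ + 1)).filter
      (fun p : ℕ => p.Prime ∧ (p : ℝ) ^ c ≤ (Pplus (p - 1) : ℝ) ∧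
        (Pplus (p - 1) : ℝ) < x ^ c) ⊆ Nat.primesLE ⌊y⌋₊ ∪ Q.biUnion (fun q =>
      ((Finset.Ioc 0 ⌊x / q⌋₊).filter (fun m => (m * q + 1).Prime)).image
        (fun m => m * q + 1)) := by
    intro p hp
    rw [Finset.mem_filter, Finset.mem_range] at hp
    obtain ⟨h1, h2, h3, h4⟩ := hp
    rw [Finset.mem_union]
    by_cases hpy : (p : ℝ) ≤ y
    · left
      rw [Nat.mem_primesLE]
      exact ⟨Nat.le_floor hpy, h2⟩
    · right
      push Not at hpy
      have hp3 : 3 < p := by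
        have : (3 : ℝ) < p := by linarith
        exact_mod_cast this
      obtain ⟨hq, m, hm⟩ := Pplus_spec (p - 1) (by omega)
      set q := Pplus (p - 1)
      have hpe : p = m * q + 1 := by rw [mul_comm]; omega
      have hpx : (p : ℝ) ≤ x := (Nat.le_floor_iff hx.le).mp (by omega)
      have hq0 : (0 : ℝ) < q := by exact_mod_cast hq.pos
      rw [Finset.mem_biUnion]
      refine ⟨q, ?_, ?_⟩
      · rw [hQ, Finset.mem_filter, Finset.mem_Icc]
        refine ⟨⟨hq.one_le, Nat.le_floor h4.le⟩, hq, le_trans ?_ h3, h4⟩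
        gcongr
      · rw [Finset.mem_image]
        refine ⟨m, ?_, hpe.symm⟩
        rw [Finset.mem_filter, Finset.mem_Ioc, ← hpe]
        refine ⟨⟨?_, ?_⟩, h2⟩
        · rcases Nat.eq_zero_or_pos m with h | h
          · rw [h] at hpe; omega
          · exact h
        · apply Nat.le_floor
          rw [le_div_iff₀ hq0]
          have : (p : ℝ) = m * q + 1 := by exact_mod_cast hpe
          linarith
  have hcard := (Finset.card_le_card hsub).trans (Finset.card_union_le _ _)
  have hcard2 := hcard.trans (Nat.add_le_add_left Finset.card_biUnion_le _)
  have hcard3 : (((Finset.range (⌊x⌋₊ + 1)).filter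
      (fun p : ℕ => p.Prime ∧ (p : ℝ) ^ c ≤ (Pplus (p - 1) : ℝ) ∧
        (Pplus (p - 1) : ℝ) < x ^ c)).card : ℝ) ≤ ((Nat.primesLE ⌊y⌋₊).card : ℝ) +
      ∑ q ∈ Q, ((((Finset.Ioc 0 ⌊x / q⌋₊).filter (fun m => (m * q + 1).Prime)).image
        (fun m => m * q + 1)).card : ℝ) := by exact_mod_cast hcard2
  refine hcard3.trans ?_
  apply add_le_add
  · simp
  · apply Finset.sum_le_sum
    intro q hq
    rw [hQ, Finset.mem_filter] at hq
    have hqp := hq.2.1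
    have hRq : R < q := by
      have : (R : ℝ) < q := by linarith [hq.2.2.1]
      exact_mod_cast this
    have hs := sieve_bound q ⌊x / q⌋₊ R hqp hRq hR1
    have hi : ((((Finset.Ioc 0 ⌊x / q⌋₊).filter (fun m => (m * q + 1).Prime)).image
        (fun m => m * q + 1)).card : ℝ) ≤
        (((Finset.Ioc 0 ⌊x / q⌋₊).filter (fun m => (m * q + 1).Prime)).card : ℝ) := by
      exact_mod_cast Finset.card_image_le
    refine hi.trans (hs.trans ?_)
    have hf : (⌊x / q⌋₊ : ℝ) ≤ x / q := Nat.floor_le (by positivity)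
    have := selS_nonneg R
    calc _ ≤ x / q / selS R + (R : ℝ) ^ 4 := by gcongr
      _ = _ := by ring

/-- The bound under explicit largeness assumptions. -/
lemma core (c δ x : ℝ) (hc : 0 < c) (hc2 : c < 1) (hδ : 0 < δ) (hδ1 : δ ≤ c / 8)
    (hδ2 : δ ≤ (1 - c) / 8) (hL : 1 ≤ Real.log (Real.log x)) (hx : 81 ≤ x)
    (hLx : Real.log x ≤ x ^ (1 / 2 : ℝ)) (hLx2 : Real.log x ^ 2 ≤ x ^ ((1 - c) / 2))
    (hpi : (Nat.primeCounting ⌊x / Real.log x⌋₊ : ℝ) ≤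
      (Real.log 4 + 1) * (x / Real.log x) / Real.log (x / Real.log x)) :
    |(T c x : ℝ) - (T' c x : ℝ)| ≤
      (24 * Real.log 4 / (δ * c) + 2 * (Real.log 4 + 1) + 1) * x *
        Real.log (Real.log x) / (Real.log x) ^ 2 := by
  have hx0 : 0 < x := by linarith
  have hx1 : 1 < x := by linarith
  set L := Real.log x with hLdef
  have hLpos : 0 < L := Real.log_pos hx1
  have hL1 : 1 < L := by
    by_contra h
    have := Real.log_nonpos hLpos.le (not_lt.mp h)
    linarith
  have hlog4 : 0 < Real.log 4 := Real.log_pos (by norm_num)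
  set y := x / L with hy
  have hy0 : 0 < y := by positivity
  have hyx : x ^ (1 / 2 : ℝ) ≤ y := by
    rw [hy, le_div_iff₀ hLpos]
    calc x ^ (1 / 2 : ℝ) * L ≤ x ^ (1 / 2 : ℝ) * x ^ (1 / 2 : ℝ) := by gcongr
      _ = x := by rw [← Real.rpow_add hx0]; norm_num
  have hy3 : 3 ≤ y := by
    refine le_trans ?_ hyx
    rw [← Real.sqrt_eq_rpow]
    apply Real.le_sqrt_of_sq_le
    linarith
  have hlogy : L / 2 ≤ Real.log y := by
    have := Real.log_le_log (by positivity) hyx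
    rw [Real.log_rpow hx0] at this
    linarith
  set R := ⌊x ^ δ⌋₊ with hRdef
  have hR1 : 1 ≤ R := Nat.le_floor (by simpa using Real.one_le_rpow hx1.le hδ.le)
  have hRx : (R : ℝ) ≤ x ^ δ := Nat.floor_le (by positivity)
  have hR : (R : ℝ) < y ^ c := by
    calc (R : ℝ) ≤ x ^ δ := hRx
      _ < x ^ ((1 / 2 : ℝ) * c) := Real.rpow_lt_rpow_of_exponent_lt hx1 (by linarith)
      _ = (x ^ (1 / 2 : ℝ)) ^ c := by rw [Real.rpow_mul hx0.le]
      _ ≤ y ^ c := by gcongr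
  have hmain := diff_card c x y hc hx0 hy3 R hR1 hR
  set Q := (Finset.Icc 1 ⌊x ^ c⌋₊).filter
        (fun q : ℕ => q.Prime ∧ y ^ c ≤ q ∧ (q : ℝ) < x ^ c) with hQ
  rw [Finset.sum_add_distrib, ← Finset.mul_sum, Finset.sum_const, nsmul_eq_mul] at hmain
  -- the first term
  have t1 : (Nat.primeCounting ⌊y⌋₊ : ℝ) ≤ 2 * (Real.log 4 + 1) * (x / L ^ 2) := by
    refine hpi.trans ?_
    calc (Real.log 4 + 1) * y / Real.log y ≤ (Real.log 4 + 1) * y / (L / 2) := by gcongr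
      _ = _ := by rw [hy]; field_simp
  -- the error term
  have t3 : (Q.card : ℝ) * (R : ℝ) ^ 4 ≤ x / L ^ 2 := by
    have hcard : (Q.card : ℝ) ≤ x ^ c := by
      have : Q.card ≤ ⌊x ^ c⌋₊ := by
        simpa using Finset.card_filter_le (Finset.Icc 1 ⌊x ^ c⌋₊)
          (fun q : ℕ => q.Prime ∧ y ^ c ≤ q ∧ (q : ℝ) < x ^ c)
      calc (Q.card : ℝ) ≤ (⌊x ^ c⌋₊ : ℝ) := by exact_mod_cast this
        _ ≤ _ := Nat.floor_le (by positivity)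
    have hR4 : (R : ℝ) ^ 4 ≤ x ^ ((1 - c) / 2) := by
      calc (R : ℝ) ^ 4 ≤ (x ^ δ) ^ 4 := by gcongr
        _ = x ^ (δ * 4) := by rw [← Real.rpow_natCast, ← Real.rpow_mul hx0.le]; norm_num
        _ ≤ _ := Real.rpow_le_rpow_of_exponent_le hx1.le (by linarith)
    rw [le_div_iff₀ (by positivity)]
    calc (Q.card : ℝ) * (R : ℝ) ^ 4 * L ^ 2 ≤ x ^ c * x ^ ((1 - c) / 2) * x ^ ((1 - c) / 2) := by
          gcongr
      _ = x ^ (1 : ℝ) := by rw [← Real.rpow_add hx0, ← Real.rpow_add hx0]; congr 1; ring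
      _ = x := Real.rpow_one x
  -- the main term
  have hS : δ * L / 2 ≤ selS R := by
    refine le_trans ?_ (selS_ge R)
    have h1 : Real.log (x ^ δ) ≤ Real.log (R + 1) := by
      apply Real.log_le_log (by positivity)
      exact (Nat.lt_floor_add_one _).le
    rw [Real.log_rpow hx0] at h1
    linarith
  have hsum : ∑ q ∈ Q, (1 : ℝ) / q ≤ 12 * Real.log 4 / c * (Real.log L / L) := by
    set k := ⌈Real.log L / Real.log 2⌉₊ with hk
    have hl2 : 0 < Real.log 2 := Real.log_pos (by norm_num)
    have hkle : (k : ℝ) ≤ 3 * Real.log L := by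
      have h1 : (k : ℝ) < Real.log L / Real.log 2 + 1 := Nat.ceil_lt_add_one (by positivity)
      have h2 : Real.log L / Real.log 2 ≤ 2 * Real.log L := by
        rw [div_le_iff₀ hl2]
        nlinarith [Real.log_two_gt_d9]
      linarith
    have h2k : L ≤ 2 ^ k := by
      have h1 : Real.log L / Real.log 2 ≤ k := Nat.le_ceil _
      rw [div_le_iff₀ hl2] at h1
      rw [← Real.log_le_log_iff hLpos (by positivity), Real.log_pow]
      exact h1
    have ha : 1 < y ^ c := Real.one_lt_rpow (by linarith) hc
    have hinv := sum_inv_le (y ^ c) ha k Q (by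
      intro q hq
      rw [hQ, Finset.mem_filter] at hq
      refine ⟨hq.2.1, hq.2.2.1, lt_of_lt_of_le hq.2.2.2 ?_⟩
      have hxy : x = L * y := by rw [hy]; field_simp
      calc x ^ c = L ^ c * y ^ c := by
            conv_lhs => rw [hxy]
            rw [Real.mul_rpow hLpos.le hy0.le]
        _ ≤ L ^ (1 : ℝ) * y ^ c := by
            gcongr
            exact hL1.le
        _ ≤ 2 ^ k * y ^ c := by rw [Real.rpow_one]; gcongr)
    refine hinv.trans ?_
    rw [Real.log_rpow hy0]
    calc (k : ℝ) * (2 * Real.log 4) / (c * Real.log y) ≤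
          (3 * Real.log L) * (2 * Real.log 4) / (c * (L / 2)) := by gcongr
      _ = _ := by field_simp; ring
  have t2 : x / selS R * ∑ q ∈ Q, (1 : ℝ) / q ≤
      24 * Real.log 4 / (δ * c) * (x * Real.log L / L ^ 2) := by
    have hp : 0 < δ * L / 2 := by positivity
    calc x / selS R * ∑ q ∈ Q, (1 : ℝ) / q ≤
          x / (δ * L / 2) * (12 * Real.log 4 / c * (Real.log L / L)) := by
          gcongr
          
      _ = _ := by field_simp; ring
  have hfin : x / L ^ 2 ≤ x * Real.log L / L ^ 2 := by
    gcongr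
    nlinarith
  have e : (24 * Real.log 4 / (δ * c) + 2 * (Real.log 4 + 1) + 1) * x * Real.log L / L ^ 2 =
      24 * Real.log 4 / (δ * c) * (x * Real.log L / L ^ 2) +
      2 * (Real.log 4 + 1) * (x * Real.log L / L ^ 2) + x * Real.log L / L ^ 2 := by ring
  rw [e]
  have t1' : 2 * (Real.log 4 + 1) * (x / L ^ 2) ≤
      2 * (Real.log 4 + 1) * (x * Real.log L / L ^ 2) := by gcongr
  linarith

end Analytic

/-- For fixed `0 < c < 1`, `T_c(x) = T'_c(x) + O(x log log x / (log x)^2)`. -/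
theorem T_sub_T'_bigO (c : ℝ) (hc1 : 0 < c) (hc2 : c < 1) :
    ∃ C : ℝ, 0 < C ∧ ∃ x₀ : ℝ, ∀ x ≥ x₀,
      |(T c x : ℝ) - (T' c x : ℝ)| ≤
        C * x * Real.log (Real.log x) / (Real.log x) ^ 2 := by
  set δ := min c (1 - c) / 8 with hδdef
  have hδ : 0 < δ := by
    have : 0 < min c (1 - c) := lt_min hc1 (by linarith)
    positivity
  have hδ1 : δ ≤ c / 8 := by
    have := min_le_left c (1 - c)
    linarith
  have hδ2 : δ ≤ (1 - c) / 8 := by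
    have := min_le_right c (1 - c)
    linarith
  have hlog4 : 0 < Real.log 4 := Real.log_pos (by norm_num)
  refine ⟨24 * Real.log 4 / (δ * c) + 2 * (Real.log 4 + 1) + 1, by positivity, ?_⟩
  have e1 : ∀ᶠ x : ℝ in Filter.atTop, 1 ≤ Real.log (Real.log x) :=
    (Real.tendsto_log_atTop.comp Real.tendsto_log_atTop).eventually_ge_atTop 1
  have e2 : ∀ᶠ x : ℝ in Filter.atTop, Real.log x ≤ x ^ (1 / 2 : ℝ) := by
    have h := (isLittleO_log_rpow_atTop (show (0 : ℝ) < 1 / 2 by norm_num)).bound one_pos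
    filter_upwards [h, Filter.eventually_ge_atTop 1] with x hx hx1
    rw [one_mul, Real.norm_of_nonneg (show 0 ≤ x ^ (1 / 2 : ℝ) by positivity)] at hx
    exact (le_abs_self _).trans hx
  have e3 : ∀ᶠ x : ℝ in Filter.atTop, Real.log x ^ 2 ≤ x ^ ((1 - c) / 2) := by
    have h := (isLittleO_log_rpow_atTop (show (0 : ℝ) < (1 - c) / 4 by linarith)).bound one_pos
    filter_upwards [h, Filter.eventually_ge_atTop 1] with x hx hx1
    rw [one_mul, Real.norm_of_nonneg (show 0 ≤ x ^ ((1 - c) / 4) by positivity)] at hx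
    have h1 : Real.log x ≤ x ^ ((1 - c) / 4) := (le_abs_self _).trans hx
    have h0 := Real.log_nonneg hx1
    calc Real.log x ^ 2 ≤ (x ^ ((1 - c) / 4)) ^ 2 := by gcongr
      _ = x ^ ((1 - c) / 2) := by
        rw [← Real.rpow_natCast, ← Real.rpow_mul (by linarith)]
        congr 1
        push_cast
        ring
  have hy : Filter.Tendsto (fun x : ℝ => x / Real.log x) Filter.atTop Filter.atTop := by
    apply Filter.tendsto_atTop_mono' Filter.atTop _
      (tendsto_rpow_atTop (show (0 : ℝ) < 1 / 2 by norm_num))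
    filter_upwards [e2, Filter.eventually_gt_atTop 1] with x hx hx1
    rw [le_div_iff₀ (Real.log_pos hx1)]
    calc x ^ (1 / 2 : ℝ) * Real.log x ≤ x ^ (1 / 2 : ℝ) * x ^ (1 / 2 : ℝ) := by gcongr
      _ = x := by rw [← Real.rpow_add (by linarith)]; norm_num
  have e4 := hy.eventually (Chebyshev.eventually_primeCounting_le one_pos)
  have e5 : ∀ᶠ x : ℝ in Filter.atTop, |(T c x : ℝ) - (T' c x : ℝ)| ≤
      (24 * Real.log 4 / (δ * c) + 2 * (Real.log 4 + 1) + 1) * x * Real.log (Real.log x) /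
        (Real.log x) ^ 2 := by
    filter_upwards [e1, e2, e3, e4, Filter.eventually_ge_atTop 81] with x h1 h2 h3 h4 h5
    exact core c δ x hc1 hc2 hδ hδ1 hδ2 h1 h5 h2 h3 h4
  exact Filter.eventually_atTop.mp e5
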